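/- (Difference quotient estimate) Let Ω' be an open set with closure contained in Ω. Then there is a constant C > 0, depending only on Ω', α₁, α₂, such that for every u ∈ 𝓗₀¹(Ω), every i ∈ {1,2}, and every real l with 0 < |l| < (1/2)·dist(Ω', ∂Ω), the difference quotients D_i^l u(s) = (u(s + l e_i) − u(s))/l satisfy ∫_{Ω'} |D₁^l u|² + |D₂^l u|² dxdy ≤ C ∫_Ω y^{2α₁}|∂ₓu|² + x^{2α₂}|∂_yu|² dxdy ≤ C‖u‖_{𝓗¹}². -/

import Mathlib

open MeasureTheory Set Filter

noncomputable section

/-- The open unit square `Ω = (0,1) × (0,1)` in `ℝ²`. -/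
def Omega : Set (ℝ × ℝ) := Ioo (0:ℝ) 1 ×ˢ Ioo (0:ℝ) 1

/-- Test functions on a set `s`: smooth with compact support contained in `s`. -/
def IsTestOn (s : Set (ℝ × ℝ)) (φ : ℝ × ℝ → ℝ) : Prop :=
  ContDiff ℝ (⊤ : ℕ∞) φ ∧ HasCompactSupport φ ∧ tsupport φ ⊆ s

/-- Classical partial derivative in the `x`-direction. -/
def pdx (φ : ℝ × ℝ → ℝ) (p : ℝ × ℝ) : ℝ := fderiv ℝ φ p (1, 0)

/-- Classical partial derivative in the `y`-direction. -/
def pdy (φ : ℝ × ℝ → ℝ) (p : ℝ × ℝ) : ℝ := fderiv ℝ φ p (0, 1)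

/-- `g` is a weak `x`-partial derivative of `u` on `s`. -/
def HasWeakDerivXOn (s : Set (ℝ × ℝ)) (u g : ℝ × ℝ → ℝ) : Prop :=
  LocallyIntegrableOn u s volume ∧ LocallyIntegrableOn g s volume ∧
  ∀ φ : ℝ × ℝ → ℝ, IsTestOn s φ →
    ∫ p in s, u p * pdx φ p = - ∫ p in s, g p * φ p

/-- `g` is a weak `y`-partial derivative of `u` on `s`. -/
def HasWeakDerivYOn (s : Set (ℝ × ℝ)) (u g : ℝ × ℝ → ℝ) : Prop :=
  LocallyIntegrableOn u s volume ∧ LocallyIntegrableOn g s volume ∧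
  ∀ φ : ℝ × ℝ → ℝ, IsTestOn s φ →
    ∫ p in s, u p * pdy φ p = - ∫ p in s, g p * φ p

/-- Test functions on `Ω`. -/
def IsTest (φ : ℝ × ℝ → ℝ) : Prop := IsTestOn Omega φ

/-- Membership in the weighted Sobolev space `𝓗¹(Ω)`, with weak derivatives `gx, gy`:
`u ∈ L²(Ω)`, `gx = ∂ₓu`, `gy = ∂_y u` weakly, and `y^α₁ gx, x^α₂ gy ∈ L²(Ω)`. -/
structure MemH1 (α₁ α₂ : ℝ) (u gx gy : ℝ × ℝ → ℝ) : Prop where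
  memL2 : MemLp u 2 (volume.restrict Omega)
  weakX : HasWeakDerivXOn Omega u gx
  weakY : HasWeakDerivYOn Omega u gy
  wgx : MemLp (fun p => p.2 ^ α₁ * gx p) 2 (volume.restrict Omega)
  wgy : MemLp (fun p => p.1 ^ α₂ * gy p) 2 (volume.restrict Omega)

/-- The `𝓗¹(Ω)` norm of `u` (with weak derivatives `gx, gy`). -/
def H1Norm (α₁ α₂ : ℝ) (u gx gy : ℝ × ℝ → ℝ) : ℝ :=
  Real.sqrt ((∫ p in Omega, (u p) ^ 2) +
    (∫ p in Omega, (p.2 ^ α₁ * gx p) ^ 2) +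
    (∫ p in Omega, (p.1 ^ α₂ * gy p) ^ 2))

/-- Membership in `𝓗₀¹(Ω)`: member of `𝓗¹(Ω)` approximable in the `𝓗¹` norm by
test functions. -/
def MemH10 (α₁ α₂ : ℝ) (u gx gy : ℝ × ℝ → ℝ) : Prop :=
  MemH1 α₁ α₂ u gx gy ∧
  ∀ ε : ℝ, 0 < ε → ∃ φ : ℝ × ℝ → ℝ, IsTest φ ∧
    H1Norm α₁ α₂ (fun p => u p - φ p) (fun p => gx p - pdx φ p)
      (fun p => gy p - pdy φ p) < ε

/-- Membership in `H₀(Ω) = {u ∈ 𝓗₀¹(Ω) : ∫_Ω V u² < ∞}`. -/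
def MemH0 (α₁ α₂ : ℝ) (V u gx gy : ℝ × ℝ → ℝ) : Prop :=
  MemH10 α₁ α₂ u gx gy ∧
  IntegrableOn (fun p => V p * (u p) ^ 2) Omega volume

/-- The bilinear form `a(u,v)` associated with the sub-elliptic operator with potential `V`. -/
def aForm (α₁ α₂ : ℝ) (V u gx gy v hx hy : ℝ × ℝ → ℝ) : ℝ :=
  ∫ p in Omega, ((p.2 ^ α₁ * gx p) * (p.2 ^ α₁ * hx p) +
    (p.1 ^ α₂ * gy p) * (p.1 ^ α₂ * hy p) + V p * u p * v p)

/-- The bilinear form `a₁(u,v)` (no potential). -/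
def a1Form (α₁ α₂ : ℝ) (u gx gy v hx hy : ℝ × ℝ → ℝ) : ℝ :=
  ∫ p in Omega, ((p.2 ^ α₁ * gx p) * (p.2 ^ α₁ * hx p) +
    (p.1 ^ α₂ * gy p) * (p.1 ^ α₂ * hy p))

/-- Membership in `S_p = {V ∈ L^p(Ω) : V ≥ 0 a.e., ‖V‖_{L^p(Ω)} ≤ M}`. -/
def MemSp (ppow M : ℝ) (V : ℝ × ℝ → ℝ) : Prop :=
  MemLp V (ENNReal.ofReal ppow) (volume.restrict Omega) ∧
  (∀ᵐ p ∂(volume.restrict Omega), 0 ≤ V p) ∧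
  eLpNorm V (ENNReal.ofReal ppow) (volume.restrict Omega) ≤ ENNReal.ofReal M

/-- `u` (with weak derivatives `gx, gy`) is an eigenfunction of the sub-elliptic operator
with potential `V` for the eigenvalue `lam`. -/
def IsEigenfun (α₁ α₂ : ℝ) (V : ℝ × ℝ → ℝ) (lam : ℝ) (u gx gy : ℝ × ℝ → ℝ) : Prop :=
  MemH0 α₁ α₂ V u gx gy ∧
  ∀ v hx hy : ℝ × ℝ → ℝ, MemH0 α₁ α₂ V v hx hy →
    aForm α₁ α₂ V u gx gy v hx hy = lam * ∫ p in Omega, u p * v p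

/-- The first eigenvalue `λ₁(V) = inf { a(u,u) : u ∈ H₀(Ω), ‖u‖_{L²} = 1 }`. -/
def lam1 (α₁ α₂ : ℝ) (V : ℝ × ℝ → ℝ) : ℝ :=
  sInf { r | ∃ u gx gy : ℝ × ℝ → ℝ, MemH0 α₁ α₂ V u gx gy ∧
    (∫ p in Omega, (u p) ^ 2) = 1 ∧ r = aForm α₁ α₂ V u gx gy u gx gy }

/-- `sup { a(u,u) : u ∈ span(φ), ‖u‖_{L²(Ω)} = 1 }` for a finite family `φ` with
weak derivatives `φx, φy`. -/
def rayleighSup (α₁ α₂ : ℝ) (V : ℝ × ℝ → ℝ) {k : ℕ} (φ φx φy : Fin k → ℝ × ℝ → ℝ) : ℝ :=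
  sSup { s | ∃ c : Fin k → ℝ,
    (∫ p in Omega, (∑ i, c i * φ i p) ^ 2) = 1 ∧
    s = aForm α₁ α₂ V (fun p => ∑ i, c i * φ i p) (fun p => ∑ i, c i * φx i p)
      (fun p => ∑ i, c i * φy i p) (fun p => ∑ i, c i * φ i p)
      (fun p => ∑ i, c i * φx i p) (fun p => ∑ i, c i * φy i p) }

/-- The set of values `sup { a(u,u) : u ∈ E, ‖u‖ = 1 }` over `k`-dimensional
subspaces `E` of `H₀(Ω)` (represented by `L²(Ω)`-linearly independent families of
`k` elements of `H₀(Ω)`). -/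
def minmaxSet (α₁ α₂ : ℝ) (V : ℝ × ℝ → ℝ) (k : ℕ) : Set ℝ :=
  { r | ∃ φ φx φy : Fin k → ℝ × ℝ → ℝ,
      (∀ i, MemH0 α₁ α₂ V (φ i) (φx i) (φy i)) ∧
      (∀ c : Fin k → ℝ, (∀ᵐ p ∂(volume.restrict Omega), ∑ i, c i * φ i p = 0) → c = 0) ∧
      r = rayleighSup α₁ α₂ V φ φx φy }

/-- The `k`-th eigenvalue via the min-max principle. -/
def lamk (α₁ α₂ : ℝ) (V : ℝ × ℝ → ℝ) (k : ℕ) : ℝ := sInf (minmaxSet α₁ α₂ V k)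

/-- Membership in `U = (𝓗₀¹(Ω) ∩ L^{2q}(Ω)) \ {0}`. -/
def MemU (α₁ α₂ qe : ℝ) (u gx gy : ℝ × ℝ → ℝ) : Prop :=
  MemH10 α₁ α₂ u gx gy ∧
  MemLp u (ENNReal.ofReal (2 * qe)) (volume.restrict Omega) ∧
  ¬ (∀ᵐ p ∂(volume.restrict Omega), u p = 0)

/-- The functional `J(u) = (a₁(u,u) + M ‖u‖_{L^{2q}(Ω)}²) / ‖u‖_{L²(Ω)}²`. -/
def Jfun (α₁ α₂ M qe : ℝ) (u gx gy : ℝ × ℝ → ℝ) : ℝ :=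
  (a1Form α₁ α₂ u gx gy u gx gy +
    M * (∫ p in Omega, |u p| ^ (2 * qe)) ^ (1 / qe)) / (∫ p in Omega, (u p) ^ 2)

/-- The distance `dist(A, B) = inf { dist a b : a ∈ A, b ∈ B }` between two sets. -/
def setDist (A B : Set (ℝ × ℝ)) : ℝ :=
  sInf ((fun q : (ℝ × ℝ) × (ℝ × ℝ) => dist q.1 q.2) '' (A ×ˢ B))

/-!
For smooth functions the fundamental theorem of calculus writes the difference quotient in the
direction `v` as an average over `t ∈ [0, 1]` of the derivative along `v`, translated by `t l v`;
Jensen's inequality, Fubini's theorem and translation invariance then bound its `L^p` norm by that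
of the derivative. The weight of `∂ₓu` depends on `y` only, and that of `∂_y u` on `x` only, so a
positive lower bound of the weight on the compact set `closure Ω'` persists along the segments over
which one averages, and the degenerate weight can be inserted at the cost of a constant. The
estimate passes to `L^p`-limits because, for fixed `l`, the difference quotient is a bounded
operator on `L^p`, while the constant does not depend on `l`.
-/

open scoped ENNReal NNReal Topology

section Lp

variable {X F : Type*} [MeasurableSpace X] {μ : Measure X} [NormedAddCommGroup F]

theorem enorm_integral_rpow_le_lintegral_enorm_rpow [NormedSpace ℝ F] [IsProbabilityMeasure μ]
    {f : X → F} (hf : AEStronglyMeasurable f μ) {p : ℝ≥0} (hp : 1 ≤ p) :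
    ‖∫ x, f x ∂μ‖ₑ ^ (p : ℝ) ≤ ∫⁻ x, ‖f x‖ₑ ^ (p : ℝ) ∂μ := by
  rw [← eLpNorm_nnreal_pow_eq_lintegral (zero_lt_one.trans_le hp).ne']
  gcongr
  calc ‖∫ x, f x ∂μ‖ₑ ≤ eLpNorm f 1 μ := by
        rw [eLpNorm_one_eq_lintegral_enorm]
        exact enorm_integral_le_lintegral_enorm f
    _ ≤ eLpNorm f p μ := eLpNorm_le_eLpNorm_of_exponent_le (mod_cast hp) hf

theorem eLpNorm_two_eq_ofReal_sqrt_integral {f : X → ℝ} (hf : MemLp f 2 μ) :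
    eLpNorm f 2 μ = ENNReal.ofReal √(∫ x, f x ^ 2 ∂μ) := by
  simp [hf.eLpNorm_eq_integral_rpow_norm two_ne_zero ENNReal.ofNat_ne_top, Real.sqrt_eq_rpow]

theorem integral_sq_le_of_eLpNorm_two_le {Y : Type*} [MeasurableSpace Y] {ν : Measure Y}
    {f : X → ℝ} {g : Y → ℝ} (hf : MemLp f 2 μ) (hg : MemLp g 2 ν) {K : ℝ≥0}
    (hfg : eLpNorm f 2 μ ≤ K * eLpNorm g 2 ν) :
    ∫ x, f x ^ 2 ∂μ ≤ (K : ℝ) ^ 2 * ∫ y, g y ^ 2 ∂ν := by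
  rw [eLpNorm_two_eq_ofReal_sqrt_integral hf, eLpNorm_two_eq_ofReal_sqrt_integral hg,
    ← ENNReal.ofReal_coe_nnreal, ← ENNReal.ofReal_mul K.coe_nonneg,
    ENNReal.ofReal_le_ofReal_iff (by positivity), Real.sqrt_le_left (by positivity), mul_pow,
    Real.sq_sqrt (integral_nonneg fun _ ↦ sq_nonneg _)] at hfg
  exact hfg

end Lp

theorem exists_pos_forall_one_le_mul_nnnorm {X : Type*} [TopologicalSpace X] {w : X → ℝ}
    {k : Set X} (hk : IsCompact k) (hw : ContinuousOn w k) (hw₀ : ∀ x ∈ k, w x ≠ 0) :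
    ∃ K : ℝ≥0, 0 < K ∧ ∀ x ∈ k, 1 ≤ K * ‖w x‖₊ := by
  obtain ⟨K, hK_pos, hK⟩ :=
    (hk.image_of_continuousOn (hw.inv₀ hw₀)).isBounded.exists_pos_norm_le
  lift K to ℝ≥0 using hK_pos.le
  refine ⟨K, mod_cast hK_pos, fun x hx ↦ ?_⟩
  have hinv : ‖w x‖₊⁻¹ ≤ K := NNReal.coe_le_coe.1 (by simpa using hK _ (mem_image_of_mem _ hx))
  exact (inv_le_iff_one_le_mul₀ (nnnorm_pos.2 (hw₀ x hx))).1 hinv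

/-- The difference quotient `D_v^l u (x) = (u (x + l v) - u x) / l` of step `l` in the direction
`v`. It is `0` when `l = 0`. -/
def diffQuot {E F : Type*} [AddCommGroup E] [Module ℝ E] [AddCommGroup F] [Module ℝ F]
    (v : E) (l : ℝ) (u : E → F) (x : E) : F :=
  l⁻¹ • (u (x + l • v) - u x)

theorem diffQuot_add {E F : Type*} [AddCommGroup E] [Module ℝ E] [AddCommGroup F] [Module ℝ F]
    (v : E) (l : ℝ) (f g : E → F) : diffQuot v l (f + g) = diffQuot v l f + diffQuot v l g := by
  ext x
  simp only [diffQuot, Pi.add_apply, ← smul_add]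
  congr 1
  abel

section Translation

variable {E F : Type*} [AddCommGroup E] [MeasurableSpace E] [MeasurableAdd E] {μ : Measure E}
  [μ.IsAddRightInvariant] [NormedAddCommGroup F] {p : ℝ≥0∞} {S T : Set E} {f : E → F} {a : E}

theorem measurePreserving_add_right_restrict (μ : Measure E) [μ.IsAddRightInvariant]
    (hT : MeasurableSet T) :
    MeasurePreserving (· + a) (μ.restrict ((· + a) ⁻¹' T)) (μ.restrict T) :=
  (measurePreserving_add_right μ a).restrict_preimage hT

theorem aestronglyMeasurable_comp_add_right (hT : MeasurableSet T) (hST : ∀ x ∈ S, x + a ∈ T)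
    (hf : AEStronglyMeasurable f (μ.restrict T)) :
    AEStronglyMeasurable (fun x ↦ f (x + a)) (μ.restrict S) :=
  (hf.comp_measurePreserving (measurePreserving_add_right_restrict μ hT)).mono_measure
    (Measure.restrict_mono hST le_rfl)

theorem eLpNorm_comp_add_right_le (hT : MeasurableSet T) (hST : ∀ x ∈ S, x + a ∈ T)
    (hf : AEStronglyMeasurable f (μ.restrict T)) :
    eLpNorm (fun x ↦ f (x + a)) p (μ.restrict S) ≤ eLpNorm f p (μ.restrict T) :=
  calc eLpNorm (fun x ↦ f (x + a)) p (μ.restrict S)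
      ≤ eLpNorm (f ∘ (· + a)) p (μ.restrict ((· + a) ⁻¹' T)) :=
        eLpNorm_mono_measure _ (Measure.restrict_mono hST le_rfl)
    _ = eLpNorm f p (μ.restrict T) :=
        eLpNorm_comp_measurePreserving hf (measurePreserving_add_right_restrict μ hT)

variable [NormedSpace ℝ F] [Module ℝ E] {v : E} {l : ℝ}

theorem aestronglyMeasurable_diffQuot (hT : MeasurableSet T) (hS : S ⊆ T)
    (hST : ∀ x ∈ S, x + l • v ∈ T) (hf : AEStronglyMeasurable f (μ.restrict T)) :
    AEStronglyMeasurable (diffQuot v l f) (μ.restrict S) :=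
  ((aestronglyMeasurable_comp_add_right hT hST hf).sub
    (hf.mono_measure (Measure.restrict_mono hS le_rfl))).const_smul _

theorem eLpNorm_diffQuot_le (hp : 1 ≤ p) (hT : MeasurableSet T) (hS : S ⊆ T)
    (hST : ∀ x ∈ S, x + l • v ∈ T) (hf : AEStronglyMeasurable f (μ.restrict T)) :
    eLpNorm (diffQuot v l f) p (μ.restrict S) ≤ ‖l⁻¹‖ₑ * (2 * eLpNorm f p (μ.restrict T)) := by
  have hST_measure := Measure.restrict_mono (μ := μ) hS le_rfl
  calc eLpNorm (diffQuot v l f) p (μ.restrict S)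
      = ‖l⁻¹‖ₑ * eLpNorm ((fun x ↦ f (x + l • v)) - f) p (μ.restrict S) :=
        eLpNorm_const_smul _ _ _ _
    _ ≤ ‖l⁻¹‖ₑ * (eLpNorm (fun x ↦ f (x + l • v)) p (μ.restrict S)
          + eLpNorm f p (μ.restrict S)) := by
        gcongr
        exact eLpNorm_sub_le (aestronglyMeasurable_comp_add_right hT hST hf)
          (hf.mono_measure hST_measure) hp
    _ ≤ ‖l⁻¹‖ₑ * (2 * eLpNorm f p (μ.restrict T)) := by
        rw [two_mul]
        gcongr
        exact eLpNorm_comp_add_right_le hT hST hf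

theorem memLp_diffQuot (hp : 1 ≤ p) (hT : MeasurableSet T) (hS : S ⊆ T)
    (hST : ∀ x ∈ S, x + l • v ∈ T) (hf : MemLp f p (μ.restrict T)) :
    MemLp (diffQuot v l f) p (μ.restrict S) := by
  have hf_ne := hf.2.ne
  exact ⟨aestronglyMeasurable_diffQuot hT hS hST hf.1,
    (eLpNorm_diffQuot_le hp hT hS hST hf.1).trans_lt (by finiteness)⟩

end Translation

section ContDiff

variable {E F : Type*} [NormedAddCommGroup E] [NormedSpace ℝ E] [NormedAddCommGroup F]
  [NormedSpace ℝ F] {φ : E → F} {v : E} {l : ℝ}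

theorem diffQuot_eq_integral_fderiv [CompleteSpace F] (hφ : ContDiff ℝ 1 φ) (hl : l ≠ 0) (x : E) :
    diffQuot v l φ x = ∫ t in Icc (0 : ℝ) 1, fderiv ℝ φ (x + t • l • v) v := by
  have hcont : Continuous fun t : ℝ ↦ fderiv ℝ φ (x + t • l • v) (l • v) := by fun_prop
  have hderiv (t : ℝ) :
      HasDerivAt (fun t : ℝ ↦ φ (x + t • l • v)) (fderiv ℝ φ (x + t • l • v) (l • v)) t := by
    have hline : HasDerivAt (fun t : ℝ ↦ x + t • l • v) (l • v) t := by
      simpa using ((hasDerivAt_id t).smul_const (l • v)).const_add x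
    exact ((hφ.differentiable one_ne_zero) _).hasFDerivAt.comp_hasDerivAt t hline
  have hftc : ∫ t in (0 : ℝ)..1, fderiv ℝ φ (x + t • l • v) (l • v) = φ (x + l • v) - φ x := by
    simpa using intervalIntegral.integral_eq_sub_of_hasDerivAt (fun t _ ↦ hderiv t)
      (hcont.intervalIntegrable 0 1)
  simp only [map_smul, intervalIntegral.integral_smul] at hftc
  rw [diffQuot, ← hftc, inv_smul_smul₀ hl, intervalIntegral.integral_of_le zero_le_one,
    integral_Icc_eq_integral_Ioc]

variable [MeasurableSpace E] [BorelSpace E] [SecondCountableTopology E] {μ : Measure E}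
  [SFinite μ] [μ.IsAddRightInvariant] [CompleteSpace F] {p : ℝ≥0∞} {S T : Set E}

theorem eLpNorm_diffQuot_le_eLpNorm_fderiv (hp : 1 ≤ p)
    (hp_top : p ≠ ∞) (hφ : ContDiff ℝ 1 φ) (hl : l ≠ 0) (hT : MeasurableSet T)
    (hST : ∀ x ∈ S, segment ℝ x (x + l • v) ⊆ T) :
    eLpNorm (diffQuot v l φ) p (μ.restrict S) ≤ eLpNorm (fderiv ℝ φ · v) p (μ.restrict T) := by
  lift p to ℝ≥0 using hp_top
  have hp : 1 ≤ p := mod_cast hp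
  have hp_ne : p ≠ 0 := (zero_lt_one.trans_le hp).ne'
  have hcont : Continuous (fderiv ℝ φ · v) := by fun_prop
  have : IsProbabilityMeasure (volume.restrict (Icc (0 : ℝ) 1)) := ⟨by simp⟩
  rw [← ENNReal.rpow_le_rpow_iff (z := p) (by positivity), eLpNorm_nnreal_pow_eq_lintegral hp_ne]
  calc ∫⁻ x in S, ‖diffQuot v l φ x‖ₑ ^ (p : ℝ) ∂μ
      ≤ ∫⁻ x in S, (∫⁻ t in Icc (0 : ℝ) 1, ‖fderiv ℝ φ (x + t • l • v) v‖ₑ ^ (p : ℝ)) ∂μ := by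
        gcongr with x
        rw [diffQuot_eq_integral_fderiv hφ hl]
        exact enorm_integral_rpow_le_lintegral_enorm_rpow
          (Continuous.aestronglyMeasurable (by fun_prop)) hp
    _ = ∫⁻ t in Icc (0 : ℝ) 1, ∫⁻ x in S, ‖fderiv ℝ φ (x + t • l • v) v‖ₑ ^ (p : ℝ) ∂μ := by
        have hcont₂ : Continuous fun z : E × ℝ ↦ fderiv ℝ φ (z.1 + z.2 • l • v) v := by fun_prop
        exact lintegral_lintegral_swap (hcont₂.enorm.measurable.pow_const (p : ℝ)).aemeasurable
    _ ≤ ∫⁻ _ in Icc (0 : ℝ) 1, eLpNorm (fderiv ℝ φ · v) p (μ.restrict T) ^ (p : ℝ) := by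
        refine setLIntegral_mono' measurableSet_Icc fun t ht ↦ ?_
        rw [← eLpNorm_nnreal_pow_eq_lintegral hp_ne]
        gcongr
        refine eLpNorm_comp_add_right_le (f := (fderiv ℝ φ · v)) (a := t • l • v) hT
          (fun x hx ↦ hST x hx ?_) hcont.aestronglyMeasurable
        rw [segment_eq_image']
        exact ⟨t, ht, by simp⟩
    _ = eLpNorm (fderiv ℝ φ · v) p (μ.restrict T) ^ (p : ℝ) := by simp

theorem eLpNorm_diffQuot_le_mul_eLpNorm_smul_fderiv (hp : 1 ≤ p)
    (hp_top : p ≠ ∞) (hφ : ContDiff ℝ 1 φ) (hl : l ≠ 0) (hT : MeasurableSet T)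
    (hST : ∀ x ∈ S, segment ℝ x (x + l • v) ⊆ T) {w : E → ℝ} (hw : Measurable w)
    (hwv : ∀ (x : E) (t : ℝ), w (x + t • v) = w x) {K : ℝ≥0} (hK : ∀ x ∈ S, 1 ≤ K * ‖w x‖₊) :
    eLpNorm (diffQuot v l φ) p (μ.restrict S)
      ≤ K * eLpNorm (fun x ↦ w x • fderiv ℝ φ x v) p (μ.restrict T) := by
  set T' := T ∩ {x | 1 ≤ K * ‖w x‖₊}
  have hT' : MeasurableSet T' :=
    hT.inter (measurableSet_le measurable_const (hw.nnnorm.const_mul K))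
  -- `w` is constant on the segments `[x, x + l v]`, so its lower bound on `S` propagates to them.
  have hST' : ∀ x ∈ S, segment ℝ x (x + l • v) ⊆ T' := by
    refine fun x hx ↦ subset_inter (hST x hx) fun y hy ↦ ?_
    rw [segment_eq_image'] at hy
    obtain ⟨t, -, rfl⟩ := hy
    simpa [smul_smul, hwv] using hK x hx
  calc eLpNorm (diffQuot v l φ) p (μ.restrict S)
      ≤ eLpNorm (fderiv ℝ φ · v) p (μ.restrict T') :=
        eLpNorm_diffQuot_le_eLpNorm_fderiv hp hp_top hφ hl hT' hST'
    _ ≤ K • eLpNorm (fun x ↦ w x • fderiv ℝ φ x v) p (μ.restrict T') := by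
        refine eLpNorm_le_nnreal_smul_eLpNorm_of_ae_le_mul
          (ae_restrict_of_forall_mem hT' fun x hx ↦ ?_) p
        rw [nnnorm_smul, ← mul_assoc]
        exact le_mul_of_one_le_left' hx.2
    _ ≤ K * eLpNorm (fun x ↦ w x • fderiv ℝ φ x v) p (μ.restrict T) := by
        rw [ENNReal.smul_def, smul_eq_mul]
        gcongr
        exact inter_subset_left

/-- `u ∈ L^p(μ)` has the strong weighted derivative `g` in the direction `v`: it is an `L^p`-limit
of `C¹` functions whose derivatives along `v`, multiplied by the weight `w`, converge to
`w • g ∈ L^p(μ)`. The weight may degenerate, so `g` itself need not be in `L^p(μ)`. -/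
structure HasStrongLineDeriv (p : ℝ≥0∞) (μ : Measure E) (w : E → ℝ) (v : E) (u g : E → F) :
    Prop where
  memLp : MemLp u p μ
  memLp_smul : MemLp (fun x ↦ w x • g x) p μ
  exists_contDiff : ∀ ε : ℝ, 0 < ε → ∃ φ : E → F, ContDiff ℝ 1 φ ∧
    eLpNorm (u - φ) p μ ≤ ENNReal.ofReal ε ∧
    eLpNorm (fun x ↦ w x • (g x - fderiv ℝ φ x v)) p μ ≤ ENNReal.ofReal ε

namespace HasStrongLineDeriv

variable {Ω : Set E} {w : E → ℝ} {u g : E → F}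

theorem eLpNorm_diffQuot_le_add (h : HasStrongLineDeriv p (μ.restrict Ω) w v u g)
    (hp : 1 ≤ p) (hp_top : p ≠ ∞) (hl : l ≠ 0) (hΩ : MeasurableSet Ω)
    (hSΩ : ∀ x ∈ S, segment ℝ x (x + l • v) ⊆ Ω) (hw : Measurable w)
    (hwv : ∀ (x : E) (t : ℝ), w (x + t • v) = w x) {K : ℝ≥0} (hK : ∀ x ∈ S, 1 ≤ K * ‖w x‖₊)
    {ε : ℝ} (hε : 0 < ε) :
    eLpNorm (diffQuot v l u) p (μ.restrict S) ≤ ‖l⁻¹‖ₑ * (2 * ENNReal.ofReal ε)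
      + K * (eLpNorm (fun x ↦ w x • g x) p (μ.restrict Ω) + ENNReal.ofReal ε) := by
  obtain ⟨φ, hφ, hu_sub, hg_sub⟩ := h.exists_contDiff ε hε
  have hS : S ⊆ Ω := fun x hx ↦ hSΩ x hx (left_mem_segment ℝ _ _)
  have hSl : ∀ x ∈ S, x + l • v ∈ Ω := fun x hx ↦ hSΩ x hx (right_mem_segment ℝ _ _)
  have hφ_meas : AEStronglyMeasurable φ (μ.restrict Ω) := hφ.continuous.aestronglyMeasurable
  have hu_sub_meas := h.memLp.1.sub hφ_meas
  have hdφ_meas : AEStronglyMeasurable (fun x ↦ w x • fderiv ℝ φ x v) (μ.restrict Ω) :=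
    hw.aestronglyMeasurable.smul (Continuous.aestronglyMeasurable (by fun_prop))
  have hdφ_le : eLpNorm (fun x ↦ w x • fderiv ℝ φ x v) p (μ.restrict Ω)
      ≤ eLpNorm (fun x ↦ w x • g x) p (μ.restrict Ω) + ENNReal.ofReal ε := by
    have hsub : (fun x ↦ w x • (g x - fderiv ℝ φ x v))
        = (fun x ↦ w x • g x) - fun x ↦ w x • fderiv ℝ φ x v := funext fun x ↦ smul_sub _ _ _
    calc eLpNorm (fun x ↦ w x • fderiv ℝ φ x v) p (μ.restrict Ω)
        = eLpNorm ((fun x ↦ w x • g x) - fun x ↦ w x • (g x - fderiv ℝ φ x v)) p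
            (μ.restrict Ω) := by rw [hsub, sub_sub_cancel]
      _ ≤ _ := (eLpNorm_sub_le h.memLp_smul.1 (hsub ▸ h.memLp_smul.1.sub hdφ_meas) hp).trans
            (by gcongr)
  calc eLpNorm (diffQuot v l u) p (μ.restrict S)
      = eLpNorm (diffQuot v l (u - φ) + diffQuot v l φ) p (μ.restrict S) := by
        rw [← diffQuot_add, sub_add_cancel]
    _ ≤ eLpNorm (diffQuot v l (u - φ)) p (μ.restrict S)
          + eLpNorm (diffQuot v l φ) p (μ.restrict S) :=
        eLpNorm_add_le (aestronglyMeasurable_diffQuot hΩ hS hSl hu_sub_meas)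
          (aestronglyMeasurable_diffQuot hΩ hS hSl hφ_meas) hp
    _ ≤ ‖l⁻¹‖ₑ * (2 * eLpNorm (u - φ) p (μ.restrict Ω))
          + K * eLpNorm (fun x ↦ w x • fderiv ℝ φ x v) p (μ.restrict Ω) := by
        gcongr
        · exact eLpNorm_diffQuot_le hp hΩ hS hSl hu_sub_meas
        · exact eLpNorm_diffQuot_le_mul_eLpNorm_smul_fderiv hp hp_top hφ hl hΩ hSΩ hw hwv hK
    _ ≤ _ := by gcongr

theorem eLpNorm_diffQuot_le (h : HasStrongLineDeriv p (μ.restrict Ω) w v u g)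
    (hp : 1 ≤ p) (hp_top : p ≠ ∞) (hl : l ≠ 0) (hΩ : MeasurableSet Ω)
    (hSΩ : ∀ x ∈ S, segment ℝ x (x + l • v) ⊆ Ω) (hw : Measurable w)
    (hwv : ∀ (x : E) (t : ℝ), w (x + t • v) = w x) {K : ℝ≥0}
    (hK : ∀ x ∈ S, 1 ≤ K * ‖w x‖₊) :
    eLpNorm (diffQuot v l u) p (μ.restrict S)
      ≤ K * eLpNorm (fun x ↦ w x • g x) p (μ.restrict Ω) := by
  set B := eLpNorm (fun x ↦ w x • g x) p (μ.restrict Ω)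
  have hε : Tendsto ENNReal.ofReal (𝓝[>] 0) (𝓝 0) := by
    simpa using (ENNReal.continuous_ofReal.tendsto 0).mono_left nhdsWithin_le_nhds
  have hlim : Tendsto
      (fun ε : ℝ ↦ ‖l⁻¹‖ₑ * (2 * ENNReal.ofReal ε) + K * (B + ENNReal.ofReal ε))
      (𝓝[>] 0) (𝓝 (‖l⁻¹‖ₑ * (2 * 0) + K * (B + 0))) :=
    (ENNReal.Tendsto.const_mul (ENNReal.Tendsto.const_mul hε (by simp)) (by simp)).add
      (ENNReal.Tendsto.const_mul (hε.const_add B) (by simp))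
  simp only [mul_zero, zero_add, add_zero] at hlim
  exact ge_of_tendsto hlim <| eventually_mem_nhdsWithin.mono fun ε hε ↦
    h.eLpNorm_diffQuot_le_add hp hp_top hl hΩ hSΩ hw hwv hK hε

end HasStrongLineDeriv

theorem exists_integral_sq_diffQuot_le {Ω : Set E} {w : E → ℝ} (hΩ : MeasurableSet Ω)
    (hS : IsCompact (closure S)) (hw : Measurable w) (hw_cont : ContinuousOn w (closure S))
    (hw₀ : ∀ x ∈ closure S, w x ≠ 0) (hwv : ∀ (x : E) (t : ℝ), w (x + t • v) = w x) :
    ∃ C : ℝ, 0 < C ∧ ∀ u g : E → ℝ, HasStrongLineDeriv 2 (μ.restrict Ω) w v u g →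
      ∀ l : ℝ, l ≠ 0 → (∀ x ∈ S, segment ℝ x (x + l • v) ⊆ Ω) →
        IntegrableOn (fun x ↦ diffQuot v l u x ^ 2) S μ ∧
          ∫ x in S, diffQuot v l u x ^ 2 ∂μ ≤ C * ∫ x in Ω, (w x * g x) ^ 2 ∂μ := by
  obtain ⟨K, hK_pos, hK⟩ := exists_pos_forall_one_le_mul_nnnorm hS hw_cont hw₀
  refine ⟨(K : ℝ) ^ 2, by positivity, fun u g hug l hl hSΩ ↦ ?_⟩
  have hmem : MemLp (diffQuot v l u) 2 (μ.restrict S) :=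
    memLp_diffQuot one_le_two hΩ (fun x hx ↦ hSΩ x hx (left_mem_segment ℝ _ _))
      (fun x hx ↦ hSΩ x hx (right_mem_segment ℝ _ _)) hug.memLp
  exact ⟨hmem.integrable_sq, integral_sq_le_of_eLpNorm_two_le hmem hug.memLp_smul <|
    hug.eLpNorm_diffQuot_le one_le_two ENNReal.ofNat_ne_top hl hΩ hSΩ hw hwv
      fun x hx ↦ hK x (subset_closure hx)⟩

end ContDiff

section TestFunctions

variable {s : Set (ℝ × ℝ)} {φ w u g : ℝ × ℝ → ℝ}

theorem IsTestOn.memLp (hφ : IsTestOn s φ) (p : ℝ≥0∞) (μ : Measure (ℝ × ℝ))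
    [IsFiniteMeasureOnCompacts μ] : MemLp φ p μ :=
  hφ.1.continuous.memLp_of_hasCompactSupport hφ.2.1

theorem IsTestOn.memLp_mul_fderiv (hφ : IsTestOn s φ) (hs : IsOpen s) (hw : ContinuousOn w s)
    (v : ℝ × ℝ) (p : ℝ≥0∞) (μ : Measure (ℝ × ℝ)) [IsFiniteMeasureOnCompacts μ] :
    MemLp (fun x ↦ w x * fderiv ℝ φ x v) p μ := by
  obtain ⟨hsmooth, hcompact, hsub⟩ := hφ
  have hderiv : Continuous (fderiv ℝ φ · v) :=
    (hsmooth.continuous_fderiv (by simp)).clm_apply continuous_const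
  have htsupport : tsupport (fun x ↦ w x * fderiv ℝ φ x v) ⊆ s :=
    (tsupport_mul_subset_right.trans (tsupport_fderiv_apply_subset ℝ v)).trans hsub
  have hcont : Continuous fun x ↦ w x * fderiv ℝ φ x v :=
    (hw.mul hderiv.continuousOn).continuous_of_tsupport_subset hs htsupport
  exact hcont.memLp_of_hasCompactSupport (hcompact.fderiv_apply ℝ v).mul_left

theorem hasStrongLineDeriv_of_forall_exists_isTestOn {v : ℝ × ℝ} (hs : IsOpen s)
    (hw : ContinuousOn w s) (hu : MemLp u 2 (volume.restrict s))
    (hg : MemLp (fun p ↦ w p * g p) 2 (volume.restrict s))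
    (happrox : ∀ ε : ℝ, 0 < ε → ∃ φ, IsTestOn s φ ∧ √(∫ p in s, (u p - φ p) ^ 2) ≤ ε ∧
      √(∫ p in s, (w p * (g p - fderiv ℝ φ p v)) ^ 2) ≤ ε) :
    HasStrongLineDeriv 2 (volume.restrict s) w v u g := by
  refine ⟨hu, hg, fun ε hε ↦ ?_⟩
  obtain ⟨φ, hφ, hu_le, hg_le⟩ := happrox ε hε
  have hu_sub : MemLp (u - φ) 2 (volume.restrict s) := hu.sub (hφ.memLp 2 _)
  have hg_sub : MemLp (fun p ↦ w p * (g p - fderiv ℝ φ p v)) 2 (volume.restrict s) := by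
    simp only [mul_sub]
    exact hg.sub (hφ.memLp_mul_fderiv hs hw v 2 _)
  refine ⟨φ, hφ.1.of_le (by simp), ?_, ?_⟩
  · rw [eLpNorm_two_eq_ofReal_sqrt_integral hu_sub]
    exact ENNReal.ofReal_le_ofReal hu_le
  · simp only [smul_eq_mul]
    rw [eLpNorm_two_eq_ofReal_sqrt_integral hg_sub]
    exact ENNReal.ofReal_le_ofReal hg_le

end TestFunctions

section UnitSquare

theorem isOpen_Omega : IsOpen Omega :=
  isOpen_Ioo.prod isOpen_Ioo

theorem isBounded_Omega : Bornology.IsBounded Omega :=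
  (Metric.isBounded_Ioo 0 1).prod (Metric.isBounded_Ioo 0 1)

theorem fst_pos_of_mem_Omega {p : ℝ × ℝ} (hp : p ∈ Omega) : 0 < p.1 :=
  hp.1.1

theorem snd_pos_of_mem_Omega {p : ℝ × ℝ} (hp : p ∈ Omega) : 0 < p.2 :=
  hp.2.1

theorem continuousOn_fst_rpow_Omega (α : ℝ) : ContinuousOn (fun p : ℝ × ℝ ↦ p.1 ^ α) Omega :=
  continuousOn_fst.rpow_const fun _ hp ↦ Or.inl (fst_pos_of_mem_Omega hp).ne'

theorem continuousOn_snd_rpow_Omega (α : ℝ) : ContinuousOn (fun p : ℝ × ℝ ↦ p.2 ^ α) Omega :=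
  continuousOn_snd.rpow_const fun _ hp ↦ Or.inl (snd_pos_of_mem_Omega hp).ne'

end UnitSquare

section SetDist

variable {A B s : Set (ℝ × ℝ)}

theorem setDist_le_dist {a b : ℝ × ℝ} (ha : a ∈ A) (hb : b ∈ B) : setDist A B ≤ dist a b :=
  csInf_le ⟨0, forall_mem_image.2 fun _ _ ↦ dist_nonneg⟩ ⟨(a, b), ⟨ha, hb⟩, rfl⟩

theorem ball_setDist_frontier_subset (hAs : A ⊆ s) {a : ℝ × ℝ} (ha : a ∈ A) :
    Metric.ball a (setDist A (frontier s)) ⊆ s := by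
  rcases eq_or_ne s univ with rfl | hs
  · exact subset_univ _
  obtain ⟨b, hb, hab⟩ := exists_mem_frontier_infDist_compl_eq_dist (hAs ha) hs
  calc Metric.ball a (setDist A (frontier s))
      ⊆ Metric.ball a (Metric.infDist a sᶜ) :=
        Metric.ball_subset_ball ((setDist_le_dist ha hb).trans_eq hab.symm)
    _ ⊆ s := Metric.ball_infDist_compl_subset

theorem segment_subset_of_norm_lt_setDist_frontier (hAs : A ⊆ s) {h : ℝ × ℝ}
    (hh : ‖h‖ < setDist A (frontier s)) {a : ℝ × ℝ} (ha : a ∈ A) :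
    segment ℝ a (a + h) ⊆ s :=
  ((convex_ball _ _).segment_subset (Metric.mem_ball_self ((norm_nonneg h).trans_lt hh))
    (by simpa using hh)).trans (ball_setDist_frontier_subset hAs ha)

end SetDist

section WeightedSobolev

variable {α₁ α₂ : ℝ} {u gx gy : ℝ × ℝ → ℝ}

theorem H1Norm_sq (α₁ α₂ : ℝ) (u gx gy : ℝ × ℝ → ℝ) :
    H1Norm α₁ α₂ u gx gy ^ 2 = (∫ p in Omega, u p ^ 2)
      + (∫ p in Omega, (p.2 ^ α₁ * gx p) ^ 2) + ∫ p in Omega, (p.1 ^ α₂ * gy p) ^ 2 :=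
  Real.sq_sqrt (by positivity)

theorem MemH1.integral_weighted_sq_add (hu : MemH1 α₁ α₂ u gx gy) :
    ∫ p in Omega, (p.2 ^ (2 * α₁) * gx p ^ 2 + p.1 ^ (2 * α₂) * gy p ^ 2) =
      (∫ p in Omega, (p.2 ^ α₁ * gx p) ^ 2) + ∫ p in Omega, (p.1 ^ α₂ * gy p) ^ 2 := by
  rw [← integral_add hu.wgx.integrable_sq hu.wgy.integrable_sq]
  refine setIntegral_congr_fun isOpen_Omega.measurableSet fun p hp ↦ ?_
  have hx := (fst_pos_of_mem_Omega hp).le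
  have hy := (snd_pos_of_mem_Omega hp).le
  simp only [mul_pow, mul_comm (2 : ℝ), Real.rpow_mul hx, Real.rpow_mul hy, Real.rpow_two]

theorem MemH1.integral_weighted_sq_add_le (hu : MemH1 α₁ α₂ u gx gy) :
    ∫ p in Omega, (p.2 ^ (2 * α₁) * gx p ^ 2 + p.1 ^ (2 * α₂) * gy p ^ 2) ≤
      H1Norm α₁ α₂ u gx gy ^ 2 := by
  have hu_nonneg : 0 ≤ ∫ p in Omega, u p ^ 2 := by positivity
  rw [hu.integral_weighted_sq_add, H1Norm_sq]
  linarith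

theorem sqrt_integral_sq_le_H1Norm (α₁ α₂ : ℝ) (u gx gy : ℝ × ℝ → ℝ) :
    √(∫ p in Omega, u p ^ 2) ≤ H1Norm α₁ α₂ u gx gy := by
  refine Real.sqrt_le_sqrt ?_
  rw [add_assoc]
  exact le_add_of_nonneg_right (by positivity)

theorem MemH10.hasStrongLineDeriv_fst (hu : MemH10 α₁ α₂ u gx gy) :
    HasStrongLineDeriv 2 (volume.restrict Omega) (fun p ↦ p.2 ^ α₁) (1, 0) u gx := by
  refine hasStrongLineDeriv_of_forall_exists_isTestOn isOpen_Omega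
    (continuousOn_snd_rpow_Omega α₁) hu.1.memL2 hu.1.wgx fun ε hε ↦ ?_
  obtain ⟨φ, hφ, hφε⟩ := hu.2 ε hε
  refine ⟨φ, hφ, (sqrt_integral_sq_le_H1Norm ..).trans hφε.le, le_trans ?_ hφε.le⟩
  refine Real.sqrt_le_sqrt ?_
  rw [add_right_comm]
  exact le_add_of_nonneg_left (by positivity)

theorem MemH10.hasStrongLineDeriv_snd (hu : MemH10 α₁ α₂ u gx gy) :
    HasStrongLineDeriv 2 (volume.restrict Omega) (fun p ↦ p.1 ^ α₂) (0, 1) u gy := by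
  refine hasStrongLineDeriv_of_forall_exists_isTestOn isOpen_Omega
    (continuousOn_fst_rpow_Omega α₂) hu.1.memL2 hu.1.wgy fun ε hε ↦ ?_
  obtain ⟨φ, hφ, hφε⟩ := hu.2 ε hε
  refine ⟨φ, hφ, (sqrt_integral_sq_le_H1Norm ..).trans hφε.le, le_trans ?_ hφε.le⟩
  exact Real.sqrt_le_sqrt (le_add_of_nonneg_left (by positivity))

theorem exists_integral_sq_diffQuot_fst_le (α₁ α₂ : ℝ) {Ω' : Set (ℝ × ℝ)}
    (hΩ' : closure Ω' ⊆ Omega) :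
    ∃ C : ℝ, 0 < C ∧ ∀ u gx gy : ℝ × ℝ → ℝ, MemH10 α₁ α₂ u gx gy →
      ∀ l : ℝ, l ≠ 0 → |l| < setDist Ω' (frontier Omega) →
        IntegrableOn (fun p ↦ diffQuot (1, 0) l u p ^ 2) Ω' ∧
          ∫ p in Ω', diffQuot (1, 0) l u p ^ 2 ≤ C * ∫ p in Omega, (p.2 ^ α₁ * gx p) ^ 2 := by
  have hΩ'_sub : Ω' ⊆ Omega := subset_closure.trans hΩ'
  obtain ⟨C, hC, h⟩ := exists_integral_sq_diffQuot_le (μ := volume) (v := ((1 : ℝ), (0 : ℝ)))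
    isOpen_Omega.measurableSet (isBounded_Omega.subset hΩ'_sub).isCompact_closure
    (measurable_snd.pow_const α₁) ((continuousOn_snd_rpow_Omega α₁).mono hΩ')
    (fun p hp ↦ (Real.rpow_pos_of_pos (snd_pos_of_mem_Omega (hΩ' hp)) α₁).ne') (by simp)
  refine ⟨C, hC, fun u gx gy hu l hl hl_lt ↦ ?_⟩
  exact h u gx hu.hasStrongLineDeriv_fst l hl fun p hp ↦
    segment_subset_of_norm_lt_setDist_frontier hΩ'_sub (by simpa using hl_lt) hp

theorem exists_integral_sq_diffQuot_snd_le (α₁ α₂ : ℝ) {Ω' : Set (ℝ × ℝ)}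
    (hΩ' : closure Ω' ⊆ Omega) :
    ∃ C : ℝ, 0 < C ∧ ∀ u gx gy : ℝ × ℝ → ℝ, MemH10 α₁ α₂ u gx gy →
      ∀ l : ℝ, l ≠ 0 → |l| < setDist Ω' (frontier Omega) →
        IntegrableOn (fun p ↦ diffQuot (0, 1) l u p ^ 2) Ω' ∧
          ∫ p in Ω', diffQuot (0, 1) l u p ^ 2 ≤ C * ∫ p in Omega, (p.1 ^ α₂ * gy p) ^ 2 := by
  have hΩ'_sub : Ω' ⊆ Omega := subset_closure.trans hΩ'
  obtain ⟨C, hC, h⟩ := exists_integral_sq_diffQuot_le (μ := volume) (v := ((0 : ℝ), (1 : ℝ)))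
    isOpen_Omega.measurableSet (isBounded_Omega.subset hΩ'_sub).isCompact_closure
    (measurable_fst.pow_const α₂) ((continuousOn_fst_rpow_Omega α₂).mono hΩ')
    (fun p hp ↦ (Real.rpow_pos_of_pos (fst_pos_of_mem_Omega (hΩ' hp)) α₂).ne') (by simp)
  refine ⟨C, hC, fun u gx gy hu l hl hl_lt ↦ ?_⟩
  exact h u gy hu.hasStrongLineDeriv_snd l hl fun p hp ↦
    segment_subset_of_norm_lt_setDist_frontier hΩ'_sub (by simpa using hl_lt) hp

end WeightedSobolev

theorem difference_quotient_estimate_general (α₁ α₂ : ℝ) (Ω' : Set (ℝ × ℝ))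
    (hΩ' : closure Ω' ⊆ Omega) :
    ∃ C : ℝ, 0 < C ∧ ∀ u gx gy : ℝ × ℝ → ℝ, MemH10 α₁ α₂ u gx gy →
      ∀ l : ℝ, l ≠ 0 → |l| < setDist Ω' (frontier Omega) →
        (∫ p in Ω', (((u (p + (l, 0)) - u p) / l) ^ 2 +
            ((u (p + (0, l)) - u p) / l) ^ 2)) ≤
          C * (∫ p in Omega, (p.2 ^ (2 * α₁) * (gx p) ^ 2 + p.1 ^ (2 * α₂) * (gy p) ^ 2)) ∧
        C * (∫ p in Omega, (p.2 ^ (2 * α₁) * (gx p) ^ 2 + p.1 ^ (2 * α₂) * (gy p) ^ 2)) ≤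
          C * (H1Norm α₁ α₂ u gx gy) ^ 2 := by
  obtain ⟨C₁, hC₁, hx⟩ := exists_integral_sq_diffQuot_fst_le α₁ α₂ hΩ'
  obtain ⟨C₂, hC₂, hy⟩ := exists_integral_sq_diffQuot_snd_le α₁ α₂ hΩ'
  refine ⟨C₁ + C₂, by positivity, fun u gx gy hu l hl hl_lt ↦ ⟨?_, ?_⟩⟩
  · obtain ⟨hx_int, hx_le⟩ := hx u gx gy hu l hl hl_lt
    obtain ⟨hy_int, hy_le⟩ := hy u gx gy hu l hl hl_lt
    calc ∫ p in Ω', (((u (p + (l, 0)) - u p) / l) ^ 2 + ((u (p + (0, l)) - u p) / l) ^ 2)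
        = ∫ p in Ω', (diffQuot (1, 0) l u p ^ 2 + diffQuot (0, 1) l u p ^ 2) := by
          simp [diffQuot, div_eq_inv_mul]
      _ = (∫ p in Ω', diffQuot (1, 0) l u p ^ 2) + ∫ p in Ω', diffQuot (0, 1) l u p ^ 2 :=
          integral_add hx_int hy_int
      _ ≤ C₁ * (∫ p in Omega, (p.2 ^ α₁ * gx p) ^ 2)
            + C₂ * ∫ p in Omega, (p.1 ^ α₂ * gy p) ^ 2 := add_le_add hx_le hy_le
      _ ≤ (C₁ + C₂) * (∫ p in Omega, (p.2 ^ α₁ * gx p) ^ 2)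
            + (C₁ + C₂) * ∫ p in Omega, (p.1 ^ α₂ * gy p) ^ 2 := by
          gcongr <;> linarith
      _ = _ := by rw [hu.1.integral_weighted_sq_add, mul_add]
  · gcongr
    exact hu.1.integral_weighted_sq_add_le

/-- Difference quotient estimate: for `Ω' ⊂⊂ Ω` there is `C > 0`
such that for every `u ∈ 𝓗₀¹(Ω)` and every `l` with `0 < |l| < dist(Ω',∂Ω)/2`,
`∫_{Ω'} |D₁^l u|² + |D₂^l u|² ≤ C ∫_Ω y^{2α₁}|∂ₓu|² + x^{2α₂}|∂_yu|² ≤ C ‖u‖_{𝓗¹}²`. -/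
theorem difference_quotient_estimate (α₁ α₂ : ℝ)
    (hα₁ : α₁ ∈ Ioo (0:ℝ) (1/2)) (hα₂ : α₂ ∈ Ioo (0:ℝ) (1/2))
    (Ω' : Set (ℝ × ℝ)) (hΩ'open : IsOpen Ω') (hΩ' : closure Ω' ⊆ Omega) :
    ∃ C : ℝ, 0 < C ∧ ∀ u gx gy : ℝ × ℝ → ℝ, MemH10 α₁ α₂ u gx gy →
      ∀ l : ℝ, l ≠ 0 → |l| < setDist Ω' (frontier Omega) / 2 →
        (∫ p in Ω', (((u (p + (l, 0)) - u p) / l) ^ 2 +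
            ((u (p + (0, l)) - u p) / l) ^ 2)) ≤
          C * (∫ p in Omega, (p.2 ^ (2*α₁) * (gx p) ^ 2 + p.1 ^ (2*α₂) * (gy p) ^ 2)) ∧
        C * (∫ p in Omega, (p.2 ^ (2*α₁) * (gx p) ^ 2 + p.1 ^ (2*α₂) * (gy p) ^ 2)) ≤
          C * (H1Norm α₁ α₂ u gx gy) ^ 2 := by
  obtain ⟨C, hC, h⟩ := difference_quotient_estimate_general α₁ α₂ Ω' hΩ'
  exact ⟨C, hC, fun u gx gy hu l hl hl_lt ↦ h u gx gy hu l hl (by linarith [abs_nonneg l])⟩
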